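/- Let λ ∈ (0,1), β² > 0, let Φ(r) = λ·√(r² + (1−r²)²/(β² + 2(1−r²))), and let r∞ ∈ (0, λ) be the unique fixed point of Φ. For any initial condition r₀ ∈ [0,1), the sequence defined by r_{t+1} = Φ(r_t) converges to r∞; moreover the convergence is monotone: if r₀ < r∞ the sequence is strictly increasing and bounded above by r∞, and if r₀ > r∞ it is strictly decreasing and bounded below by r∞. -/

import Mathlib

/-- The pre-scaling variance `Λ²(r,K,η,σ)` of the rating update
(observation-noise standard deviation `β`). -/
noncomputable def Lam2 (β r K η σ : ℝ) : ℝ :=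
  σ ^ 2 * ((1 - K) ^ 2 + K ^ 2 + 2 * K * (1 - K) * η)
    + K ^ 2 * (β ^ 2 + 2 * (1 - η * r ^ 2))
    + 2 * K * (1 - K) * (1 - η) * r * σ
    - 2 * K ^ 2 * (1 - η) * r * σ

/-- The one-step accuracy transition function
`Ψ(r,K,η,σ) = λ[rσ(1 − K(1−η)) + K(1 − ηr²)]/√(Λ²(r,K,η,σ))`. -/
noncomputable def Psi (lam β r K η σ : ℝ) : ℝ :=
  lam * (r * σ * (1 - K * (1 - η)) + K * (1 - η * r ^ 2))
    / Real.sqrt (Lam2 β r K η σ)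

/-- The invariant one-step accuracy map
`Φ(r) = λ√(r² + (1−r²)²/(β² + 2(1−r²)))`. -/
noncomputable def Phi (lam β r : ℝ) : ℝ :=
  lam * Real.sqrt (r ^ 2 + (1 - r ^ 2) ^ 2 / (β ^ 2 + 2 * (1 - r ^ 2)))

/-!
Put `u = 1 - r ^ 2`, so that `Φ(r)² = λ² (1 - (u - u² / (β² + 2u)))`. For `u ≥ 0`, both
`u² / (β² + 2u)` and `u - u² / (β² + 2u)` are strictly increasing. The second fact makes `Φ`
strictly increasing on `[0, 1]`, so orbits cannot cross the fixed point. The first one makes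
`Φ(r)² - r² = λ² u² / (β² + 2u) - (1 - λ²) r²` strictly decreasing in `r`; as it vanishes at `r∞`,
`Φ` moves every other point towards `r∞`. Orbits are therefore monotone, and by continuity their
limit is a fixed point, which can only be `r∞`.
-/

open Set Filter Function
open scoped Topology

section Iterate

variable {α : Type*} {f : α → α} {s : Set α} {a b c x : α}

lemma isFixedPt_of_tendsto_iterate_of_continuousWithinAt [TopologicalSpace α] [T2Space α]
    (hf : ContinuousWithinAt f s c) (hs : ∀ n, f^[n] x ∈ s)
    (hlim : Tendsto (fun n ↦ f^[n] x) atTop (𝓝 c)) : IsFixedPt f c := by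
  have hlim_within : Tendsto (fun n ↦ f^[n] x) atTop (𝓝[s] c) :=
    tendsto_nhdsWithin_iff.2 ⟨hlim, .of_forall hs⟩
  have hlim_succ : Tendsto (fun n ↦ f (f^[n] x)) atTop (𝓝 c) := by
    simpa only [iterate_succ_apply'] using (tendsto_add_atTop_iff_nat 1).2 hlim
  exact tendsto_nhds_unique (hf.tendsto.comp hlim_within) hlim_succ

lemma strictMono_iterate_of_mapsTo_of_lt_apply [Preorder α] (hs : MapsTo f s s)
    (hlt : ∀ y ∈ s, y < f y) (hx : x ∈ s) : StrictMono fun n ↦ f^[n] x :=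
  strictMono_nat_of_lt_succ fun n ↦ by
    simpa only [iterate_succ_apply'] using hlt _ (hs.iterate n hx)

lemma mapsTo_Ico_of_strictMonoOn_of_lt_apply [Preorder α] (hf : StrictMonoOn f (Icc a c))
    (hc : IsFixedPt f c) (hlt : ∀ y ∈ Ico a c, y < f y) : MapsTo f (Ico a c) (Ico a c) := by
  intro y hy
  have hfy : f y < f c := hf (Ico_subset_Icc_self hy) (right_mem_Icc.2 (hy.1.trans hy.2.le)) hy.2
  exact ⟨hy.1.trans (hlt y hy).le, hfy.trans_eq hc⟩

variable [ConditionallyCompleteLinearOrder α] [TopologicalSpace α] [OrderTopology α]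

lemma tendsto_iterate_of_mapsTo_Ico_of_lt_apply (hf : ContinuousOn f (Icc a c))
    (hmaps : MapsTo f (Ico a c) (Ico a c)) (hlt : ∀ y ∈ Ico a c, y < f y) (hx : x ∈ Ico a c) :
    Tendsto (fun n ↦ f^[n] x) atTop (𝓝 c) := by
  have hmem (n : ℕ) : f^[n] x ∈ Ico a c := hmaps.iterate n hx
  have hmem' (n : ℕ) : f^[n] x ∈ Icc a c := Ico_subset_Icc_self (hmem n)
  have hmono := strictMono_iterate_of_mapsTo_of_lt_apply hmaps hlt hx
  have hlim := tendsto_atTop_ciSup hmono.monotone ⟨c, forall_mem_range.2 fun n ↦ (hmem n).2.le⟩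
  have hsup := isClosed_Icc.mem_of_tendsto hlim (.of_forall hmem')
  have hfix := isFixedPt_of_tendsto_iterate_of_continuousWithinAt (hf _ hsup) hmem' hlim
  have hsup_eq : ⨆ n, f^[n] x = c :=
    hsup.2.eq_or_lt.resolve_right fun h ↦ (hlt _ ⟨hsup.1, h⟩).ne' hfix
  rwa [hsup_eq] at hlim

theorem strictMono_and_tendsto_iterate_of_lt_fixedPt (hcont : ContinuousOn f (Icc a c))
    (hf : StrictMonoOn f (Icc a c)) (hc : IsFixedPt f c) (hlt : ∀ y ∈ Ico a c, y < f y)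
    (hx : x ∈ Ico a c) :
    StrictMono (fun n ↦ f^[n] x) ∧ Tendsto (fun n ↦ f^[n] x) atTop (𝓝 c) := by
  have hmaps := mapsTo_Ico_of_strictMonoOn_of_lt_apply hf hc hlt
  exact ⟨strictMono_iterate_of_mapsTo_of_lt_apply hmaps hlt hx,
    tendsto_iterate_of_mapsTo_Ico_of_lt_apply hcont hmaps hlt hx⟩

theorem strictAnti_and_tendsto_iterate_of_fixedPt_lt (hcont : ContinuousOn f (Icc c b))
    (hf : StrictMonoOn f (Icc c b)) (hc : IsFixedPt f c) (hlt : ∀ y ∈ Ioc c b, f y < y)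
    (hx : x ∈ Ioc c b) :
    StrictAnti (fun n ↦ f^[n] x) ∧ Tendsto (fun n ↦ f^[n] x) atTop (𝓝 c) := by
  have hdual : Icc (α := αᵒᵈ) b c = Icc c b := Icc_toDual
  exact strictMono_and_tendsto_iterate_of_lt_fixedPt (α := αᵒᵈ) (a := b)
    (hdual ▸ hcont) (hdual ▸ hf.dual) hc (fun y hy ↦ hlt y hy.symm) hx.symm

end Iterate

/-- The reduction `u ^ 2 / S` of a prior variance `u` by an optimal linear update whose innovation
has variance `S = b + 2 * u`: observation noise `b` plus the uncertainty `u` of each of the two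
ratings compared. `Phi lam β r` uses it with `b = β ^ 2` and `u = 1 - r ^ 2`. -/
noncomputable def varianceReduction (b u : ℝ) : ℝ :=
  u ^ 2 / (b + 2 * u)

section VarianceReduction

variable {b u : ℝ}

lemma varianceReduction_nonneg (hb : 0 ≤ b) (hu : 0 ≤ u) : 0 ≤ varianceReduction b u := by
  unfold varianceReduction
  positivity

lemma continuousOn_varianceReduction (hb : 0 < b) :
    ContinuousOn (varianceReduction b) (Ici 0) := by
  have hS : ∀ u ∈ Ici (0 : ℝ), b + 2 * u ≠ 0 := fun u (hu : 0 ≤ u) ↦ by positivity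
  unfold varianceReduction
  fun_prop (disch := exact hS)

lemma strictMonoOn_varianceReduction (hb : 0 < b) :
    StrictMonoOn (varianceReduction b) (Ici 0) := by
  intro u (hu : 0 ≤ u) v (hv : 0 ≤ v) huv
  have hdiff : v ^ 2 * (b + 2 * u) - u ^ 2 * (b + 2 * v)
      = (v - u) * (b * (u + v) + 2 * u * v) := by ring
  have hadd : 0 < u + v := add_pos_of_nonneg_of_pos hu (hu.trans_lt huv)
  unfold varianceReduction
  rw [div_lt_div_iff₀ (by positivity) (by positivity), ← sub_pos, hdiff]
  exact mul_pos (sub_pos.2 huv) (by positivity)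

lemma sub_varianceReduction_eq (hS : b + 2 * u ≠ 0) :
    u - varianceReduction b u = u * (b + u) / (b + 2 * u) := by
  rw [varianceReduction, sub_eq_iff_eq_add, ← add_div, eq_div_iff hS]
  ring

lemma strictMonoOn_sub_varianceReduction (hb : 0 < b) :
    StrictMonoOn (fun u ↦ u - varianceReduction b u) (Ici 0) := by
  intro u (hu : 0 ≤ u) v (hv : 0 ≤ v) huv
  have hdiff : v * (b + v) * (b + 2 * u) - u * (b + u) * (b + 2 * v)
      = (v - u) * (b ^ 2 + b * (u + v) + 2 * u * v) := by ring
  dsimp only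
  rw [sub_varianceReduction_eq (by positivity), sub_varianceReduction_eq (by positivity),
    div_lt_div_iff₀ (by positivity) (by positivity), ← sub_pos, hdiff]
  exact mul_pos (sub_pos.2 huv) (by positivity)

end VarianceReduction

section Phi

variable {lam β r s : ℝ}

lemma phi_eq : Phi lam β r = lam * √(r ^ 2 + varianceReduction (β ^ 2) (1 - r ^ 2)) :=
  rfl

lemma phi_nonneg (hlam : 0 ≤ lam) : 0 ≤ Phi lam β r :=
  mul_nonneg hlam (Real.sqrt_nonneg _)

lemma one_sub_sq_nonneg (hr : r ∈ Icc (0 : ℝ) 1) : 0 ≤ 1 - r ^ 2 :=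
  sub_nonneg.2 (pow_le_one₀ hr.1 hr.2)

lemma sq_add_varianceReduction_nonneg (hr : r ∈ Icc (0 : ℝ) 1) :
    0 ≤ r ^ 2 + varianceReduction (β ^ 2) (1 - r ^ 2) :=
  add_nonneg (sq_nonneg r) (varianceReduction_nonneg (sq_nonneg β) (one_sub_sq_nonneg hr))

lemma phi_sq (hr : r ∈ Icc (0 : ℝ) 1) :
    Phi lam β r ^ 2 = lam ^ 2 * (r ^ 2 + varianceReduction (β ^ 2) (1 - r ^ 2)) := by
  rw [phi_eq, mul_pow, Real.sq_sqrt (sq_add_varianceReduction_nonneg hr)]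

lemma continuousOn_phi (hβ : 0 < β ^ 2) : ContinuousOn (Phi lam β) (Icc 0 1) := by
  have hred : ContinuousOn (fun r : ℝ ↦ varianceReduction (β ^ 2) (1 - r ^ 2)) (Icc 0 1) :=
    (continuousOn_varianceReduction hβ).comp (by fun_prop) fun _ ↦ one_sub_sq_nonneg
  exact continuousOn_const.mul (((continuousOn_id.pow 2).add hred).sqrt)

lemma strictMonoOn_phi (hlam : 0 < lam) (hβ : 0 < β ^ 2) :
    StrictMonoOn (Phi lam β) (Icc 0 1) := by
  intro r hr s hs hrs
  have hsq : r ^ 2 < s ^ 2 := pow_lt_pow_left₀ hrs hr.1 two_ne_zero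
  have hred := strictMonoOn_sub_varianceReduction hβ (one_sub_sq_nonneg hs) (one_sub_sq_nonneg hr)
    (sub_lt_sub_left hsq 1)
  dsimp only at hred
  rw [phi_eq, phi_eq]
  exact mul_lt_mul_of_pos_left
    (Real.sqrt_lt_sqrt (sq_add_varianceReduction_nonneg hr) (by linarith)) hlam

lemma strictAntiOn_phi_sq_sub_sq (hlam : lam ^ 2 < 1) (hβ : 0 < β ^ 2) :
    StrictAntiOn (fun r ↦ Phi lam β r ^ 2 - r ^ 2) (Icc 0 1) := by
  intro r hr s hs hrs
  have hsq : r ^ 2 < s ^ 2 := pow_lt_pow_left₀ hrs hr.1 two_ne_zero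
  have hred := strictMonoOn_varianceReduction hβ (one_sub_sq_nonneg hs) (one_sub_sq_nonneg hr)
    (sub_lt_sub_left hsq 1)
  have hgain := mul_le_mul_of_nonneg_left hred.le (sq_nonneg lam)
  have hloss := mul_lt_mul_of_pos_left hsq (sub_pos.2 hlam)
  dsimp only
  rw [phi_sq hr, phi_sq hs]
  linarith

lemma lt_phi_of_lt_fixedPt (hlam0 : 0 ≤ lam) (hlam : lam ^ 2 < 1) (hβ : 0 < β ^ 2)
    (hfix : IsFixedPt (Phi lam β) s) (hs : s ≤ 1) (hr : r ∈ Ico 0 s) : r < Phi lam β r := by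
  have hgap := strictAntiOn_phi_sq_sub_sq hlam hβ
    ⟨hr.1, hr.2.le.trans hs⟩ ⟨hr.1.trans hr.2.le, hs⟩ hr.2
  dsimp only at hgap
  rw [hfix.eq, sub_self, sub_pos] at hgap
  exact lt_of_pow_lt_pow_left₀ 2 (phi_nonneg hlam0) hgap

lemma phi_lt_of_fixedPt_lt (hlam : lam ^ 2 < 1) (hβ : 0 < β ^ 2)
    (hfix : IsFixedPt (Phi lam β) s) (hs : 0 ≤ s) (hr : r ∈ Ioc s 1) : Phi lam β r < r := by
  have hgap := strictAntiOn_phi_sq_sub_sq hlam hβ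
    ⟨hs, hr.1.le.trans hr.2⟩ ⟨hs.trans hr.1.le, hr.2⟩ hr.1
  dsimp only at hgap
  rw [hfix.eq, sub_self, sub_neg] at hgap
  exact lt_of_pow_lt_pow_left₀ 2 (hs.trans hr.1.le) hgap

end Phi

/-- Let `λ ∈ (0,1)`, `β² > 0`, and let `r∞ ∈ (0,λ)` be the
unique fixed point of `Φ`. For any `r₀ ∈ [0,1)`, the sequence defined by
`r_{t+1} = Φ(r_t)` converges to `r∞`; moreover the convergence is monotone:
if `r₀ < r∞` the sequence is strictly increasing and bounded above by `r∞`,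
and if `r₀ > r∞` it is strictly decreasing and bounded below by `r∞`. -/
theorem iterates_converge_to_fixed_point
    (lam β rinf : ℝ) (hlam0 : 0 < lam) (hlam1 : lam < 1) (hβ : 0 < β ^ 2)
    (hmem : rinf ∈ Set.Ioo 0 lam) (hfix : Phi lam β rinf = rinf)
    (huniq : ∀ s ∈ Set.Icc (0 : ℝ) 1, Phi lam β s = s → s = rinf)
    (r0 : ℝ) (hr0 : 0 ≤ r0) (hr1 : r0 < 1)
    (r : ℕ → ℝ) (hinit : r 0 = r0) (hrec : ∀ t, r (t + 1) = Phi lam β (r t)) :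
    Filter.Tendsto r Filter.atTop (nhds rinf) ∧
    (r0 < rinf → StrictMono r ∧ ∀ t, r t ≤ rinf) ∧
    (rinf < r0 → StrictAnti r ∧ ∀ t, rinf ≤ r t) := by
  obtain rfl : r = fun t ↦ (Phi lam β)^[t] r0 := by
    funext t
    induction t with
    | zero => exact hinit
    | succ t ih => rw [hrec, ih, iterate_succ_apply']
  have hlam : lam ^ 2 < 1 := pow_lt_one₀ hlam0.le hlam1 two_ne_zero
  have hrinf0 : 0 ≤ rinf := hmem.1.le
  have hrinf1 : rinf ≤ 1 := (hmem.2.trans hlam1).le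
  have hcont : ContinuousOn (Phi lam β) (Icc 0 1) := continuousOn_phi hβ
  have hmono : StrictMonoOn (Phi lam β) (Icc 0 1) := strictMonoOn_phi hlam0 hβ
  rcases lt_trichotomy r0 rinf with hlt | rfl | hgt
  · have hsub : Icc 0 rinf ⊆ Icc 0 1 := Icc_subset_Icc_right hrinf1
    obtain ⟨hinc, hlim⟩ := strictMono_and_tendsto_iterate_of_lt_fixedPt (hcont.mono hsub)
      (hmono.mono hsub) hfix (fun _ ↦ lt_phi_of_lt_fixedPt hlam0.le hlam hβ hfix hrinf1) ⟨hr0, hlt⟩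
    exact ⟨hlim, fun _ ↦ ⟨hinc, hinc.monotone.ge_of_tendsto hlim⟩, fun h ↦ absurd h hlt.asymm⟩
  · simp [iterate_fixed hfix]
  · have hsub : Icc rinf 1 ⊆ Icc 0 1 := Icc_subset_Icc_left hrinf0
    obtain ⟨hdec, hlim⟩ := strictAnti_and_tendsto_iterate_of_fixedPt_lt (hcont.mono hsub)
      (hmono.mono hsub) hfix (fun _ ↦ phi_lt_of_fixedPt_lt hlam hβ hfix hrinf0) ⟨hgt, hr1.le⟩
    exact ⟨hlim, fun h ↦ absurd h hgt.asymm, fun _ ↦ ⟨hdec, hdec.antitone.le_of_tendsto hlim⟩⟩
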